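/- For every integer α, the map f_α defined by f_α(X) := X + α·min X − α·max X is an automorphism of the monoid P_fin(ℤ): it is a bijective map on nonempty finite subsets of ℤ satisfying f_α(X + Y) = f_α(X) + f_α(Y), with inverse f_{−α}. -/

import Mathlib

open Finset Pointwise

/-- Nonempty finite subsets of ℤ. -/
abbrev NFin : Type := {X : Finset ℤ // X.Nonempty}

/-- Sumset operation on nonempty finite subsets of ℤ. -/
instance : Add NFin := ⟨fun X Y => ⟨X.1 + Y.1, X.2.add Y.2⟩⟩

/-- Minimum of a nonempty finite subset of ℤ. -/
def minz (X : NFin) : ℤ := X.1.min' X.2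

/-- Maximum of a nonempty finite subset of ℤ. -/
def maxz (X : NFin) : ℤ := X.1.max' X.2

/-- Translate `X + c`. -/
def tr (X : NFin) (c : ℤ) : NFin := ⟨X.1.image (· + c), X.2.image _⟩

/-- `f_α(X) = X + α·min X − α·max X`. -/
def fa (α : ℤ) (X : NFin) : NFin := tr X (α * minz X - α * maxz X)

/-- `g_α(X) = X + (α−1)·min X − (α+1)·max X`. -/
def ga (α : ℤ) (X : NFin) : NFin := tr X ((α - 1) * minz X - (α + 1) * maxz X)

/-- Pointwise negation `X ↦ −X`. -/
def negF (X : NFin) : NFin := ⟨-X.1, X.2.neg⟩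

theorem minz_eq_of_mem_of_forall_le {X : NFin} {a : ℤ} (ha : a ∈ X.1) (h : ∀ x ∈ X.1, a ≤ x) :
    minz X = a :=
  le_antisymm (X.1.min'_le a ha) (X.1.le_min' X.2 a h)

theorem maxz_eq_of_mem_of_forall_le {X : NFin} {a : ℤ} (ha : a ∈ X.1) (h : ∀ x ∈ X.1, x ≤ a) :
    maxz X = a :=
  le_antisymm (X.1.max'_le X.2 a h) (X.1.le_max' a ha)

theorem minz_mem (X : NFin) : minz X ∈ X.1 := X.1.min'_mem X.2

theorem maxz_mem (X : NFin) : maxz X ∈ X.1 := X.1.max'_mem X.2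

theorem minz_le {X : NFin} {x : ℤ} (hx : x ∈ X.1) : minz X ≤ x := X.1.min'_le x hx

theorem le_maxz {X : NFin} {x : ℤ} (hx : x ∈ X.1) : x ≤ maxz X := X.1.le_max' x hx

theorem coe_add_nfin (X Y : NFin) : (X + Y).1 = X.1 + Y.1 := rfl

theorem minz_add (X Y : NFin) : minz (X + Y) = minz X + minz Y := by
  refine minz_eq_of_mem_of_forall_le (Finset.add_mem_add (minz_mem X) (minz_mem Y)) fun z hz => ?_
  obtain ⟨x, hx, y, hy, rfl⟩ := Finset.mem_add.1 hz
  exact add_le_add (minz_le hx) (minz_le hy)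

theorem maxz_add (X Y : NFin) : maxz (X + Y) = maxz X + maxz Y := by
  refine maxz_eq_of_mem_of_forall_le (Finset.add_mem_add (maxz_mem X) (maxz_mem Y)) fun z hz => ?_
  obtain ⟨x, hx, y, hy, rfl⟩ := Finset.mem_add.1 hz
  exact add_le_add (le_maxz hx) (le_maxz hy)

theorem tr_eq_add_singleton (X : NFin) (c : ℤ) : tr X c = X + ⟨{c}, Finset.singleton_nonempty c⟩ :=
  Subtype.ext (Finset.add_singleton (s := X.1) c).symm

theorem minz_tr (X : NFin) (c : ℤ) : minz (tr X c) = minz X + c := by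
  rw [tr_eq_add_singleton, minz_add]
  simp [minz]

theorem maxz_tr (X : NFin) (c : ℤ) : maxz (tr X c) = maxz X + c := by
  rw [tr_eq_add_singleton, maxz_add]
  simp [maxz]

theorem tr_zero (X : NFin) : tr X 0 = X :=
  Subtype.ext (by simp [tr])

theorem tr_tr (X : NFin) (c d : ℤ) : tr (tr X c) d = tr X (c + d) :=
  Subtype.ext (by simp only [tr, Finset.image_image, Function.comp_def, add_assoc])

theorem tr_add_tr (X Y : NFin) (c d : ℤ) : tr X c + tr Y d = tr (X + Y) (c + d) := by
  simp only [tr_eq_add_singleton]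
  apply Subtype.ext
  simp only [coe_add_nfin]
  rw [add_add_add_comm, Finset.singleton_add_singleton]

theorem fa_add (α : ℤ) (X Y : NFin) : fa α (X + Y) = fa α X + fa α Y := by
  simp only [fa, tr_add_tr, minz_add, maxz_add]
  congr 1
  ring

theorem fa_fa (α β : ℤ) (X : NFin) : fa α (fa β X) = fa (α + β) X := by
  simp only [fa, tr_tr, minz_tr, maxz_tr]
  congr 1
  ring

theorem fa_zero (X : NFin) : fa 0 X = X := by
  simp [fa, tr_zero]

/-- Each `f_α` is an automorphism of `P_fin(ℤ)`, with inverse `f_{−α}`. -/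
theorem stmt_12 (α : ℤ) :
    (∀ X Y : NFin, fa α (X + Y) = fa α X + fa α Y) ∧
    Function.Bijective (fa α) ∧
    fa (-α) ∘ fa α = id ∧ fa α ∘ fa (-α) = id := by
  have left_inv (β : ℤ) : Function.LeftInverse (fa (-β)) (fa β) := fun X => by
    rw [fa_fa, neg_add_cancel, fa_zero]
  have right_inv : Function.RightInverse (fa (-α)) (fa α) := by
    simpa only [neg_neg, Function.RightInverse] using left_inv (-α)
  exact ⟨fa_add α, ⟨(left_inv α).injective, right_inv.surjective⟩, (left_inv α).comp_eq_id,
    right_inv.comp_eq_id⟩
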